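/- Let k₋, k₊ be positive integers, let A₋ and A₊ be linear endomorphisms of ℝ^{k₋} and ℝ^{k₊} respectively all of whose complex eigenvalues have real part ≥ δ for some δ > 0, and let B₋, B₊ be continuously differentiable maps from a neighborhood U of 0 in ℝ^{k₋} × ℝ^{k₊} into the spaces of linear maps ℝ^{k₋+k₊} → ℝ^{k₋} and ℝ^{k₋+k₊} → ℝ^{k₊} respectively, with B₋(0) = 0 and B₊(0) = 0. Set ε = δ/2. Then there exist constants C > 0 and K₀ > 0, depending only on A_± and B_±, such that for every T > 0 and every differentiable solution x = (x₋, x₊) : [0, T] → U of the system x₋' = −A₋x₋ + B₋(x)x, x₊' = A₊x₊ + B₊(x)x with M := sup_{0 ≤ t ≤ T} ‖x(t)‖ ≤ K₀, one has ‖x(t)‖ ≤ C(e^{−εt} + e^{−ε(T−t)}) M for all t ∈ [0, T], and ∫₀^T ‖x(t)‖ dt ≤ C M. -/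

import Mathlib

/-!
If the spectrum of `a` lies in the right half plane, its Cayley transform `m` has spectral radius
below `1`, so `s = ∑ (mⁿ)* mⁿ` converges and solves `s = 1 + m* s m`. Unwinding the Cayley transform
turns this into the Lyapunov inequality `a* s + s a ≥ 0`, with `s ≥ 1`. After a shift by a rate `c`
strictly between `ε` and the real parts of the eigenvalues, one gets inner products `β`, `γ` for
which the stable linear part contracts and the unstable one expands at rate `c`.

Along a small solution, `P = β(x₋, x₋)` and `Q = γ(x₊, x₊)` then satisfy differential inequalities
coupled only by a small multiple of `P + Q`. The coupling is absorbed in `P - Q / 2`, which decays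
forwards in time, and in `Q - P / 2`, which decays backwards; their sum is `(P + Q) / 2`.
-/

open Filter Topology

section CayleyTransform

variable {R : Type*} [Ring R]

/-- The Cayley transform `(a - 1) (a + 1)⁻¹`, which carries the half plane `0 < re` to the unit
disc. When `a + 1` is not invertible, the junk value of `Ring.inverse` makes it `0`. -/
noncomputable def cayleyTransform (a : R) : R := (a - 1) * Ring.inverse (a + 1)

theorem cayleyTransform_mul_add_one {a : R} (ha : IsUnit (a + 1)) :
    cayleyTransform a * (a + 1) = a - 1 := by
  rw [cayleyTransform, mul_assoc, Ring.inverse_mul_cancel _ ha, mul_one]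

variable [Algebra ℂ R] {a : R}

theorem isUnit_add_one_of_forall_spectrum_re_pos (ha : ∀ μ ∈ spectrum ℂ a, 0 < μ.re) :
    IsUnit (a + 1) := by
  have h : (-1 : ℂ) ∉ spectrum ℂ a := fun hmem => by
    have : (0 : ℝ) < -1 := ha _ hmem
    linarith
  rw [spectrum.notMem_iff, map_neg, map_one] at h
  simpa [add_comm] using h.neg

theorem re_one_add_div_one_sub (z : ℂ) :
    ((1 + z) / (1 - z)).re = (1 - ‖z‖ ^ 2) / ‖1 - z‖ ^ 2 := by
  simp only [Complex.div_re, Complex.sq_norm, Complex.normSq_apply, Complex.add_re, Complex.sub_re,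
    Complex.add_im, Complex.sub_im, Complex.one_re, Complex.one_im]
  ring

theorem norm_lt_one_of_mem_spectrum_cayleyTransform (ha : ∀ μ ∈ spectrum ℂ a, 0 < μ.re) {z : ℂ}
    (hz : z ∈ spectrum ℂ (cayleyTransform a)) : ‖z‖ < 1 := by
  have ha1 := isUnit_add_one_of_forall_spectrum_re_pos ha
  have hmul : (algebraMap ℂ R z - cayleyTransform a) * (a + 1) = (z - 1) • a + (z + 1) • 1 := by
    rw [sub_mul, cayleyTransform_mul_add_one ha1, Algebra.algebraMap_eq_smul_one]
    simp only [smul_one_mul]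
    module
  rw [spectrum.mem_iff, ← ha1.mul_right_iff, hmul] at hz
  have hz1 : 1 - z ≠ 0 := by
    intro h
    obtain rfl : 1 = z := sub_eq_zero.mp h
    refine hz ?_
    rw [sub_self, zero_smul, zero_add, ← Algebra.algebraMap_eq_smul_one]
    exact (isUnit_iff_ne_zero.mpr (by norm_num)).map _
  have hmem : (1 + z) / (1 - z) ∈ spectrum ℂ a := by
    intro h
    refine hz ?_
    convert h.smul (Units.mk0 _ hz1) using 1
    rw [Units.smul_mk0, Algebra.algebraMap_eq_smul_one, smul_sub, smul_smul, mul_div_cancel₀ _ hz1]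
    module
  have hre := ha _ hmem
  rw [re_one_add_div_one_sub, div_pos_iff_of_pos_right (by positivity)] at hre
  exact (sq_lt_one_iff₀ (norm_nonneg z)).mp (by linarith)

end CayleyTransform

section Lyapunov

theorem summable_norm_pow_of_spectralRadius_lt_one {R : Type*} [NormedRing R] [NormedAlgebra ℂ R]
    [CompleteSpace R] {a : R} (ha : spectralRadius ℂ a < 1) : Summable fun n : ℕ => ‖a ^ n‖ := by
  obtain ⟨r, har, hr⟩ := ENNReal.lt_iff_exists_nnreal_btwn.mp ha
  have hr' : (r : ℝ) < 1 := by exact_mod_cast hr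
  have hroot := (spectrum.pow_nnnorm_pow_one_div_tendsto_nhds_spectralRadius a).eventually_lt_const
    har
  refine .of_norm_bounded_eventually_nat (summable_geometric_of_lt_one r.2 hr') ?_
  filter_upwards [hroot, eventually_gt_atTop 0] with n hn hn0
  rw [one_div] at hn
  have h := (ENNReal.rpow_inv_le_iff (by exact_mod_cast hn0)).mp hn.le
  rw [ENNReal.rpow_natCast] at h
  rw [norm_norm]
  exact_mod_cast h

variable {R : Type*} [CStarAlgebra R] [PartialOrder R] [StarOrderedRing R]

theorem exists_one_le_eq_one_add_star_mul_mul {m : R} (hm : spectralRadius ℂ m < 1) :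
    ∃ s : R, 1 ≤ s ∧ s = 1 + star m * s * m := by
  have hsum : Summable fun n : ℕ => star (m ^ n) * m ^ n := by
    have h := summable_norm_pow_of_spectralRadius_lt_one hm
    refine .of_norm_bounded_eventually_nat h ?_
    filter_upwards [h.tendsto_atTop_zero.eventually_le_const zero_lt_one] with n hn
    rw [CStarRing.norm_star_mul_self]
    exact mul_le_of_le_one_left (norm_nonneg _) hn
  have hs : ∑' n : ℕ, star (m ^ n) * m ^ n
      = 1 + star m * (∑' n : ℕ, star (m ^ n) * m ^ n) * m := by
    rw [← hsum.tsum_mul_left, ← (hsum.mul_left _).tsum_mul_right]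
    conv_lhs => rw [hsum.tsum_eq_zero_add]
    simp only [pow_zero, star_one, mul_one, pow_succ, star_mul, mul_assoc]
  refine ⟨_, ?_, hs⟩
  rw [hs, le_add_iff_nonneg_right]
  exact star_left_conjugate_nonneg (tsum_nonneg fun n => star_mul_self_nonneg _) m

theorem exists_one_le_star_mul_add_mul_nonneg {a : R} (ha : ∀ μ ∈ spectrum ℂ a, 0 < μ.re) :
    ∃ s : R, 1 ≤ s ∧ 0 ≤ star a * s + s * a := by
  have hradius : spectralRadius ℂ (cayleyTransform a) < 1 := by
    nontriviality R
    exact spectrum.spectralRadius_lt_of_forall_lt _ fun z hz =>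
      norm_lt_one_of_mem_spectrum_cayleyTransform ha hz
  obtain ⟨s, hs1, hs⟩ := exists_one_le_eq_one_add_star_mul_mul hradius
  refine ⟨s, hs1, ?_⟩
  have hcancel := cayleyTransform_mul_add_one (isUnit_add_one_of_forall_spectrum_re_pos ha)
  have hconj : star (a + 1) * s * (a + 1)
      = star (a + 1) * (a + 1) + star (a - 1) * s * (a - 1) := by
    rw [← hcancel, star_mul]
    conv_lhs => rw [hs]
    noncomm_ring
  have htwice : (2 : ℝ) • (star a * s + s * a) = star (a + 1) * (a + 1) := by
    rw [← sub_eq_zero] at hconj ⊢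
    rw [← hconj]
    simp only [star_add, star_sub, star_one, two_smul]
    noncomm_ring
  rw [← smul_nonneg_iff_nonneg_of_pos_left (zero_lt_two' ℝ), htwice]
  exact star_mul_self_nonneg _

theorem exists_one_le_smul_le_star_mul_add_mul {a : R} {c : ℝ}
    (ha : ∀ μ ∈ spectrum ℂ a, c < μ.re) :
    ∃ s : R, 1 ≤ s ∧ (2 * c) • s ≤ star a * s + s * a := by
  obtain ⟨s, hs, h⟩ := exists_one_le_star_mul_add_mul_nonneg (a := a - algebraMap ℂ R c) (by
    rw [← spectrum.sub_singleton_eq, Set.sub_singleton]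
    rintro _ ⟨μ, hμ, rfl⟩
    simpa using ha μ hμ)
  refine ⟨s, hs, ?_⟩
  rw [← sub_nonneg]
  convert h using 1
  rw [Algebra.algebraMap_eq_smul_one, Complex.coe_smul, star_sub, star_smul, star_one,
    star_trivial c, sub_mul, mul_sub, smul_one_mul, mul_smul_one]
  module

end Lyapunov

section AccretiveForm

variable {E F : Type*} [NormedAddCommGroup E] [NormedSpace ℝ E] [NormedAddCommGroup F]
  [NormedSpace ℝ F]

/-- `β` is an inner product inducing the topology (a bounded coercive symmetric form) for which `A`
is accretive at rate `c`, that is `A - c` has nonnegative quadratic form. -/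
structure IsAccretiveForm (β : E →L[ℝ] E →L[ℝ] ℝ) (A : E →ₗ[ℝ] E) (c : ℝ) : Prop where
  symm : ∀ x y, β x y = β y x
  isCoercive : IsCoercive β
  mul_le : ∀ x, c * β x x ≤ β (A x) x

namespace IsAccretiveForm

theorem nonneg {β : E →L[ℝ] E →L[ℝ] ℝ} {A : E →ₗ[ℝ] E} {c : ℝ}
    (h : IsAccretiveForm β A c) (x : E) : 0 ≤ β x x := by
  obtain ⟨κ, hκ, hβ⟩ := h.isCoercive
  exact le_trans (by positivity) (hβ x)

theorem comap {β : F →L[ℝ] F →L[ℝ] ℝ} {B : F →ₗ[ℝ] F} {c : ℝ} (h : IsAccretiveForm β B c)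
    {A : E →ₗ[ℝ] E} {j : E →L[ℝ] F} {K : NNReal} (hj : AntilipschitzWith K j)
    (hjA : ∀ x, j (A x) = B (j x)) : IsAccretiveForm (β.bilinearComp j j) A c where
  symm x y := h.symm (j x) (j y)
  isCoercive := by
    obtain ⟨κ, hκ, hβ⟩ := h.isCoercive
    refine ⟨κ / (K + 1) ^ 2, by positivity, fun x => ?_⟩
    have hx : ‖x‖ ≤ (K + 1) * ‖j x‖ := by
      have := j.bound_of_antilipschitz hj x
      linarith [norm_nonneg (j x)]
    calc κ / (K + 1) ^ 2 * ‖x‖ * ‖x‖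
        ≤ κ / (K + 1) ^ 2 * ((K + 1) * ‖j x‖) * ((K + 1) * ‖j x‖) := by gcongr
      _ = κ * ‖j x‖ * ‖j x‖ := by field_simp
      _ ≤ β (j x) (j x) := hβ (j x)
  mul_le x := by simpa only [ContinuousLinearMap.bilinearComp_apply, hjA] using h.mul_le (j x)

end IsAccretiveForm

theorem exists_isAccretiveForm_of_forall_spectrum {H : Type*} [NormedAddCommGroup H]
    [InnerProductSpace ℂ H] [CompleteSpace H] {A : H →L[ℂ] H} {c : ℝ}
    (hA : ∀ μ ∈ spectrum ℂ A, c < μ.re) :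
    ∃ β : H →L[ℝ] H →L[ℝ] ℝ, IsAccretiveForm β (A.restrictScalars ℝ) c := by
  let : InnerProductSpace ℝ H := InnerProductSpace.rclikeToReal ℂ H
  obtain ⟨S, hS1, hS⟩ := exists_one_le_smul_le_star_mul_add_mul hA
  have hsymm : ∀ x y, inner ℂ (S x) y = inner ℂ x (S y) := by
    have := (ContinuousLinearMap.nonneg_iff_isPositive S).mp (zero_le_one.trans hS1)
    exact this.isSymmetric
  let β : H →L[ℝ] H →L[ℝ] ℝ := (innerSL ℝ).comp (S.restrictScalars ℝ)
  have hβ : ∀ x y, β x y = (inner ℂ (S x) y).re := fun _ _ => rfl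
  refine ⟨β, ⟨fun x y => ?_, ⟨1, one_pos, fun x => ?_⟩, fun x => ?_⟩⟩
  · rw [hβ, hβ, hsymm]
    exact inner_re_symm (𝕜 := ℂ) x (S y)
  · have h := ((ContinuousLinearMap.le_def _ _).mp hS1).re_inner_nonneg_left x
    rw [_root_.sub_apply, one_apply_eq_self, inner_sub_left, map_sub,
      inner_self_eq_norm_mul_norm] at h
    rw [one_mul, hβ]
    exact sub_nonneg.mp h
  · have h := ((ContinuousLinearMap.le_def _ _).mp hS).re_inner_nonneg_left x
    have hAS : (inner ℂ ((star A * S) x) x).re = (inner ℂ ((S * A) x) x).re := by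
      rw [ContinuousLinearMap.star_eq_adjoint, mul_apply_eq_comp,
        ContinuousLinearMap.adjoint_inner_left, hsymm]
      exact inner_re_symm (𝕜 := ℂ) x (S (A x))
    have hcS : (inner ℂ (((2 * c) • S) x) x).re = 2 * c * β x x := by
      rw [hβ, _root_.smul_apply, ← Complex.coe_smul, inner_smul_left, Complex.conj_ofReal,
        Complex.re_ofReal_mul]
    have hSA : β (A x) x = (inner ℂ ((S * A) x) x).re := rfl
    rw [_root_.sub_apply, _root_.add_apply, inner_sub_left,
      inner_add_left, map_sub, map_add, RCLike.re_eq_complex_re, hAS, hcS, ← hSA] at h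
    change c * β x x ≤ β (A x) x
    linarith

theorem exists_isAccretiveForm [FiniteDimensional ℝ E] {A : E →ₗ[ℝ] E} {c : ℝ}
    (hA : ∀ μ ∈ A.charpoly.aroots ℂ, c < μ.re) :
    ∃ β : E →L[ℝ] E →L[ℝ] ℝ, IsAccretiveForm β A c := by
  let b := Module.finBasis ℝ E
  let M := (LinearMap.toMatrix b b A).map Complex.ofRealHom
  have hM : ∀ μ ∈ spectrum ℂ (Matrix.toEuclideanCLM (𝕜 := ℂ) M), c < μ.re := by
    intro μ hμ
    rw [AlgEquiv.spectrum_eq, Matrix.mem_spectrum_iff_isRoot_charpoly, Matrix.charpoly_map,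
      LinearMap.charpoly_toMatrix] at hμ
    exact hA μ ((Polynomial.mem_roots ((LinearMap.charpoly_monic A).map _).ne_zero).mpr hμ)
  obtain ⟨β, hβ⟩ := exists_isAccretiveForm_of_forall_spectrum hM
  let j : E →ₗ[ℝ] EuclideanSpace ℂ (Fin (Module.finrank ℝ E)) :=
    (WithLp.linearEquiv 2 ℝ (Fin (Module.finrank ℝ E) → ℂ)).symm.toLinearMap ∘ₗ
      Complex.ofRealCLM.toLinearMap.compLeft _ ∘ₗ b.equivFun.toLinearMap
  obtain ⟨K, -, hK⟩ := j.exists_antilipschitzWith (LinearMap.ker_eq_bot.mpr (by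
    intro x y hxy
    refine b.equivFun.injective (funext fun i => Complex.ofReal_injective ?_)
    exact congrFun (congrArg WithLp.ofLp hxy) i))
  refine ⟨_, hβ.comap (j := j.toContinuousLinearMap) hK fun x => ?_⟩
  ext i
  change ((b.repr (A x) i : ℝ) : ℂ) = M.mulVec (fun i => (b.repr x i : ℂ)) i
  rw [← LinearMap.toMatrix_mulVec_repr b b A x]
  exact RingHom.map_mulVec Complex.ofRealHom _ _ i

end AccretiveForm

section Dichotomy

theorem le_exp_mul_of_hasDerivWithinAt_le {f f' : ℝ → ℝ} {k a b : ℝ} (hab : a ≤ b)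
    (hf : ∀ t ∈ Set.Icc a b, HasDerivWithinAt f (f' t) (Set.Icc a b) t)
    (hf' : ∀ t ∈ Set.Icc a b, f' t ≤ k * f t) : f b ≤ Real.exp (k * (b - a)) * f a := by
  have h := le_gronwallBound_of_liminf_deriv_right_le (ε := 0)
    (fun t ht => (hf t ht).continuousWithinAt)
    (fun t ht _ hr => ((hf t (Set.Ico_subset_Icc_self ht)).mono_of_mem_nhdsWithin
      (Icc_mem_nhdsGE_of_mem ht)).liminf_right_slope_le hr)
    le_rfl (fun t ht => by simpa using hf' t (Set.Ico_subset_Icc_self ht))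
    b (Set.right_mem_Icc.mpr hab)
  rwa [gronwallBound_ε0, mul_comm] at h

theorem le_exp_neg_mul_of_le_hasDerivWithinAt {f f' : ℝ → ℝ} {k a b : ℝ} (hab : a ≤ b)
    (hf : ∀ t ∈ Set.Icc a b, HasDerivWithinAt f (f' t) (Set.Icc a b) t)
    (hf' : ∀ t ∈ Set.Icc a b, k * f t ≤ f' t) : f a ≤ Real.exp (-k * (b - a)) * f b := by
  have h := le_exp_mul_of_hasDerivWithinAt_le (k := k) hab (fun t ht => (hf t ht).neg)
    (fun t ht => by simpa using hf' t ht)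
  calc f a = Real.exp (-k * (b - a)) * (Real.exp (k * (b - a)) * f a) := by
        rw [← mul_assoc, ← Real.exp_add]; simp
    _ ≤ Real.exp (-k * (b - a)) * f b := by
        gcongr
        simpa using h

theorem add_le_exp_mul_add_exp_mul_of_dichotomy {P Q P' Q' : ℝ → ℝ} {κ η T : ℝ} (hκ : 0 ≤ κ)
    (hη : 0 ≤ η)
    (hP : ∀ t ∈ Set.Icc 0 T, HasDerivWithinAt P (P' t) (Set.Icc 0 T) t)
    (hQ : ∀ t ∈ Set.Icc 0 T, HasDerivWithinAt Q (Q' t) (Set.Icc 0 T) t)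
    (hP0 : ∀ t ∈ Set.Icc 0 T, 0 ≤ P t) (hQ0 : ∀ t ∈ Set.Icc 0 T, 0 ≤ Q t)
    (hP' : ∀ t ∈ Set.Icc 0 T, P' t ≤ -(κ + 3 * η) * P t + η * (P t + Q t))
    (hQ' : ∀ t ∈ Set.Icc 0 T, (κ + 3 * η) * Q t - η * (P t + Q t) ≤ Q' t) {t : ℝ}
    (ht : t ∈ Set.Icc 0 T) :
    P t + Q t ≤ 2 * (Real.exp (-κ * t) * P 0 + Real.exp (-κ * (T - t)) * Q T) := by
  have hfwd : P t - 1 / 2 * Q t ≤ Real.exp (-κ * (t - 0)) * (P 0 - 1 / 2 * Q 0) := by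
    have hsub : Set.Icc 0 t ⊆ Set.Icc 0 T := Set.Icc_subset_Icc_right ht.2
    refine le_exp_mul_of_hasDerivWithinAt_le (f := fun s => P s - 1 / 2 * Q s) ht.1
      (fun s hs => ((hP s (hsub hs)).mono hsub).sub
        (((hQ s (hsub hs)).mono hsub).const_mul (1 / 2))) fun s hs => ?_
    linarith [hP' s (hsub hs), hQ' s (hsub hs), mul_nonneg hκ (hQ0 s (hsub hs)),
      mul_nonneg hη (hP0 s (hsub hs))]
  have hbwd : Q t - 1 / 2 * P t ≤ Real.exp (-κ * (T - t)) * (Q T - 1 / 2 * P T) := by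
    have hsub : Set.Icc t T ⊆ Set.Icc 0 T := Set.Icc_subset_Icc_left ht.1
    refine le_exp_neg_mul_of_le_hasDerivWithinAt (f := fun s => Q s - 1 / 2 * P s) ht.2
      (fun s hs => ((hQ s (hsub hs)).mono hsub).sub
        (((hP s (hsub hs)).mono hsub).const_mul (1 / 2))) fun s hs => ?_
    linarith [hP' s (hsub hs), hQ' s (hsub hs), mul_nonneg hκ (hP0 s (hsub hs)),
      mul_nonneg hη (hQ0 s (hsub hs))]
  have hT : (0 : ℝ) ≤ T := ht.1.trans ht.2
  have hQ0' := mul_nonneg (Real.exp_nonneg (-κ * t)) (hQ0 0 (Set.left_mem_Icc.mpr hT))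
  have hPT := mul_nonneg (Real.exp_nonneg (-κ * (T - t))) (hP0 T (Set.right_mem_Icc.mpr hT))
  rw [sub_zero] at hfwd
  linarith

theorem setIntegral_Icc_le_of_le_exp_add_exp {f : ℝ → ℝ} {ε D T : ℝ} (hε : 0 < ε) (hD : 0 ≤ D)
    (hT : 0 ≤ T) (hf : ContinuousOn f (Set.Icc 0 T))
    (hle : ∀ t ∈ Set.Icc 0 T, f t ≤ D * (Real.exp (-ε * t) + Real.exp (-ε * (T - t)))) :
    ∫ t in Set.Icc 0 T, f t ≤ D * (2 / ε) := by
  have hexp : ∫ t in 0..T, Real.exp (-ε * t) = (1 - Real.exp (-ε * T)) / ε := by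
    rw [intervalIntegral.integral_comp_mul_left Real.exp (neg_ne_zero.mpr hε.ne'), integral_exp,
      mul_zero, Real.exp_zero, smul_eq_mul, inv_neg]
    ring
  have hcont : Continuous fun t => D * (Real.exp (-ε * t) + Real.exp (-ε * (T - t))) := by
    fun_prop
  calc ∫ t in Set.Icc 0 T, f t
      ≤ ∫ t in Set.Icc 0 T, D * (Real.exp (-ε * t) + Real.exp (-ε * (T - t))) :=
        MeasureTheory.setIntegral_mono_on hf.integrableOn_Icc hcont.continuousOn.integrableOn_Icc
          measurableSet_Icc hle
    _ = D * (2 * ∫ t in 0..T, Real.exp (-ε * t)) := by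
        rw [MeasureTheory.integral_Icc_eq_integral_Ioc, ← intervalIntegral.integral_of_le hT,
          intervalIntegral.integral_const_mul, intervalIntegral.integral_add
            (Continuous.intervalIntegrable (by fun_prop) _ _)
            (Continuous.intervalIntegrable (by fun_prop) _ _),
          intervalIntegral.integral_comp_sub_left (fun t => Real.exp (-ε * t)), sub_self, sub_zero,
          two_mul]
    _ ≤ D * (2 / ε) := by
        rw [hexp, ← mul_div_assoc]
        gcongr
        linarith [Real.exp_pos (-ε * T)]

end Dichotomy

section BlockEstimate

variable {E F : Type*} [NormedAddCommGroup E] [NormedSpace ℝ E] [NormedAddCommGroup F]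
  [NormedSpace ℝ F] {A : E →ₗ[ℝ] E} {B : F →ₗ[ℝ] F} {β : E →L[ℝ] E →L[ℝ] ℝ}
  {γ : F →L[ℝ] F →L[ℝ] ℝ} {c ε η T : ℝ}

theorem IsAccretiveForm.hasDerivWithinAt_apply_self (hβ : IsAccretiveForm β A c) {x : ℝ → E}
    {x' : E} {s : Set ℝ} {t : ℝ} (hx : HasDerivWithinAt x x' s t) :
    HasDerivWithinAt (fun τ => β (x τ) (x τ)) (2 * β x' (x t)) s t := by
  have h := β.hasDerivWithinAt_of_bilinear hx hx
  rwa [hβ.symm (x t), ← two_mul] at h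

theorem exists_mul_sq_norm_le_add (hβ : IsCoercive β) (hγ : IsCoercive γ) :
    ∃ κ > 0, ∀ z : E × F, κ * ‖z‖ ^ 2 ≤ β z.1 z.1 + γ z.2 z.2 := by
  obtain ⟨κ, hκ, hβ⟩ := hβ
  obtain ⟨κ', hκ', hγ⟩ := hγ
  refine ⟨min κ κ', lt_min hκ hκ', fun z => ?_⟩
  have hz : ‖z‖ ^ 2 ≤ ‖z.1‖ * ‖z.1‖ + ‖z.2‖ * ‖z.2‖ := by
    rw [Prod.norm_def, ← sq, ← sq]
    rcases max_choice ‖z.1‖ ‖z.2‖ with h | h <;> simp [h]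
  calc min κ κ' * ‖z‖ ^ 2
      ≤ min κ κ' * (‖z.1‖ * ‖z.1‖ + ‖z.2‖ * ‖z.2‖) := by gcongr
    _ ≤ κ * (‖z.1‖ * ‖z.1‖) + κ' * (‖z.2‖ * ‖z.2‖) := by
        rw [mul_add]
        gcongr
        exacts [min_le_left _ _, min_le_right _ _]
    _ ≤ β z.1 z.1 + γ z.2 z.2 := by
        rw [← mul_assoc, ← mul_assoc]
        exact add_le_add (hβ z.1) (hγ z.2)

theorem eventually_abs_bilinear_le {Z : Type*} [NormedAddCommGroup Z] [NormedSpace ℝ Z]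
    (β : E →L[ℝ] F →L[ℝ] ℝ) {N : Z → E} (hN : N =o[𝓝 0] id) (L : Z →L[ℝ] F) (hη : 0 < η) :
    ∀ᶠ z in 𝓝 0, |β (N z) (L z)| ≤ η * ‖z‖ ^ 2 := by
  have hbig : (fun z => β (N z) (L z)) =O[𝓝 0] fun z => ‖N z‖ * ‖L z‖ :=
    .of_bound ‖β‖ (.of_forall fun z => by
      simpa [mul_assoc] using β.le_opNorm₂ (N z) (L z))
  have hlittle : (fun z => β (N z) (L z)) =o[𝓝 0] fun z => ‖z‖ * ‖z‖ :=
    hbig.trans_isLittleO (hN.norm_norm.mul_isBigO (L.isBigO_id _).norm_norm)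
  filter_upwards [hlittle.def hη] with z hz
  simpa [sq] using hz

theorem add_le_of_isAccretiveForm (hε : 0 ≤ ε) (hη : 0 ≤ η)
    (hβ : IsAccretiveForm β A (ε + 3 / 2 * η)) (hγ : IsAccretiveForm γ B (ε + 3 / 2 * η))
    {x f : ℝ → E × F}
    (hx : ∀ t ∈ Set.Icc 0 T,
      HasDerivWithinAt x ((-A).prodMap B (x t) + f t) (Set.Icc 0 T) t)
    (hfβ : ∀ t ∈ Set.Icc 0 T,
      |β (f t).1 (x t).1| ≤ η / 2 * (β (x t).1 (x t).1 + γ (x t).2 (x t).2))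
    (hfγ : ∀ t ∈ Set.Icc 0 T,
      |γ (f t).2 (x t).2| ≤ η / 2 * (β (x t).1 (x t).1 + γ (x t).2 (x t).2))
    {t : ℝ} (ht : t ∈ Set.Icc 0 T) :
    β (x t).1 (x t).1 + γ (x t).2 (x t).2 ≤
      2 * (Real.exp (-(2 * ε) * t) * β (x 0).1 (x 0).1 +
        Real.exp (-(2 * ε) * (T - t)) * γ (x T).2 (x T).2) := by
  refine add_le_exp_mul_add_exp_mul_of_dichotomy (by positivity) hη
    (P := fun t => β (x t).1 (x t).1) (Q := fun t => γ (x t).2 (x t).2)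
    (fun t ht => hβ.hasDerivWithinAt_apply_self (hx t ht).fst)
    (fun t ht => hγ.hasDerivWithinAt_apply_self (hx t ht).snd)
    (fun t _ => hβ.nonneg _) (fun t _ => hγ.nonneg _) (fun t ht => ?_) (fun t ht => ?_) ht
  · have hsplit : β ((-A).prodMap B (x t) + f t).1 (x t).1
        = -β (A (x t).1) (x t).1 + β (f t).1 (x t).1 := by simp
    rw [hsplit]
    linarith [hβ.mul_le (x t).1, hfβ t ht, le_abs_self (β (f t).1 (x t).1)]
  · have hsplit : γ ((-A).prodMap B (x t) + f t).2 (x t).2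
        = γ (B (x t).2) (x t).2 + γ (f t).2 (x t).2 := by simp
    rw [hsplit]
    linarith [hγ.mul_le (x t).2, hfγ t ht, neg_abs_le (γ (f t).2 (x t).2)]

theorem bilinear_self_le_opNorm_mul_sq (β : E →L[ℝ] E →L[ℝ] ℝ) {x : E} {M : ℝ} (hx : ‖x‖ ≤ M) :
    β x x ≤ ‖β‖ * M ^ 2 := by
  rw [sq, ← mul_assoc]
  exact (Real.le_norm_self _).trans (β.le_of_opNorm₂_le_of_le le_rfl hx hx)

theorem le_sqrt_mul_of_mul_sq_le {κ b p q u w M y : ℝ} (hκ : 0 < κ) (hp : p ≤ b * M ^ 2)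
    (hq : q ≤ b * M ^ 2) (hb : 0 ≤ b) (hu : 0 ≤ u) (hw : 0 ≤ w) (hM : 0 ≤ M)
    (h : κ * y ^ 2 ≤ 2 * (u ^ 2 * p + w ^ 2 * q)) : y ≤ √(2 * b / κ) * (u + w) * M := by
  refine le_of_abs_le (abs_le_of_sq_le_sq ?_ (by positivity))
  have huw : u ^ 2 + w ^ 2 ≤ (u + w) ^ 2 := by nlinarith [mul_nonneg hu hw]
  rw [← mul_le_mul_iff_right₀ hκ]
  calc κ * y ^ 2
      ≤ 2 * (u ^ 2 * p + w ^ 2 * q) := h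
    _ ≤ 2 * (u ^ 2 * (b * M ^ 2) + w ^ 2 * (b * M ^ 2)) := by gcongr
    _ = 2 * b * (u ^ 2 + w ^ 2) * M ^ 2 := by ring
    _ ≤ 2 * b * (u + w) ^ 2 * M ^ 2 := by gcongr
    _ = κ * (√(2 * b / κ) * (u + w) * M) ^ 2 := by
      rw [mul_pow, mul_pow, Real.sq_sqrt (by positivity)]
      field_simp

theorem exists_norm_le_of_isAccretiveForm (hε : 0 ≤ ε) (hεc : ε < c)
    (hβ : IsAccretiveForm β A c) (hγ : IsAccretiveForm γ B c) {N : E × F → E × F}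
    (hN : N =o[𝓝 0] id) :
    ∃ D > 0, ∃ r > 0, ∀ T : ℝ, ∀ x : ℝ → E × F, ∀ M : ℝ,
      (∀ t ∈ Set.Icc 0 T,
        HasDerivWithinAt x ((-A).prodMap B (x t) + N (x t)) (Set.Icc 0 T) t) →
      (∀ t ∈ Set.Icc 0 T, ‖x t‖ ≤ M) → M ≤ r → ∀ t ∈ Set.Icc 0 T,
        ‖x t‖ ≤ D * (Real.exp (-ε * t) + Real.exp (-ε * (T - t))) * M := by
  obtain ⟨η, hη, rfl⟩ : ∃ η > 0, c = ε + 3 / 2 * η := ⟨2 / 3 * (c - ε), by linarith, by ring⟩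
  obtain ⟨κ, hκ, hcoer⟩ := exists_mul_sq_norm_le_add hβ.isCoercive hγ.isCoercive
  have hsmall : ∀ᶠ z in 𝓝 0,
      |β (N z).1 z.1| ≤ η / 2 * κ * ‖z‖ ^ 2 ∧ |γ (N z).2 z.2| ≤ η / 2 * κ * ‖z‖ ^ 2 :=
    have hηκ : 0 < η / 2 * κ := by positivity
    (eventually_abs_bilinear_le β (Asymptotics.isLittleO_prod_left.mp hN).1 (.fst ℝ E F) hηκ).and
      (eventually_abs_bilinear_le γ (Asymptotics.isLittleO_prod_left.mp hN).2 (.snd ℝ E F) hηκ)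
  obtain ⟨r, hr, hball⟩ := Metric.nhds_basis_closedBall.eventually_iff.mp hsmall
  refine ⟨√(2 * (‖β‖ + ‖γ‖ + 1) / κ), by positivity, r, hr, fun T x M hx hM hMr t ht => ?_⟩
  have hforce : ∀ s ∈ Set.Icc 0 T,
      |β (N (x s)).1 (x s).1| ≤ η / 2 * (β (x s).1 (x s).1 + γ (x s).2 (x s).2) ∧
      |γ (N (x s)).2 (x s).2| ≤ η / 2 * (β (x s).1 (x s).1 + γ (x s).2 (x s).2) := fun s hs => by
    have hN := hball (mem_closedBall_zero_iff.mpr ((hM s hs).trans hMr))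
    have hq := mul_le_mul_of_nonneg_left (hcoer (x s)) (half_pos hη).le
    rw [← mul_assoc] at hq
    exact ⟨hN.1.trans hq, hN.2.trans hq⟩
  have henergy := add_le_of_isAccretiveForm hε hη.le hβ hγ hx (fun s hs => (hforce s hs).1)
    (fun s hs => (hforce s hs).2) ht
  have hT : 0 ≤ T := ht.1.trans ht.2
  have h0 := Set.left_mem_Icc.mpr hT
  have hTT := Set.right_mem_Icc.mpr hT
  have hsq (τ : ℝ) : Real.exp (-(2 * ε) * τ) = Real.exp (-ε * τ) ^ 2 := by
    rw [← Real.exp_nat_mul]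
    ring_nf
  rw [hsq, hsq] at henergy
  refine le_sqrt_mul_of_mul_sq_le hκ ?_ ?_ (by positivity) (Real.exp_nonneg _) (Real.exp_nonneg _)
    ((norm_nonneg _).trans (hM 0 h0)) ((hcoer _).trans henergy)
  · refine (bilinear_self_le_opNorm_mul_sq β ((norm_fst_le _).trans (hM 0 h0))).trans ?_
    gcongr
    linarith [norm_nonneg γ]
  · refine (bilinear_self_le_opNorm_mul_sq γ ((norm_snd_le _).trans (hM T hTT))).trans ?_
    gcongr
    linarith [norm_nonneg β]

end BlockEstimate

theorem hyperbolic_block_estimate_general {E F : Type*} [NormedAddCommGroup E]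
    [NormedSpace ℝ E] [FiniteDimensional ℝ E] [NormedAddCommGroup F] [NormedSpace ℝ F]
    [FiniteDimensional ℝ F] (A : E →ₗ[ℝ] E) (B : F →ₗ[ℝ] F) {ε : ℝ} (hε : 0 < ε)
    (hA : ∀ μ ∈ A.charpoly.aroots ℂ, ε < μ.re) (hB : ∀ μ ∈ B.charpoly.aroots ℂ, ε < μ.re)
    {N : E × F → E × F} (hN : N =o[𝓝 0] id) :
    ∃ C > 0, ∃ K₀ > 0, ∀ T ≥ 0, ∀ x : ℝ → E × F, ∀ M : ℝ,
      (∀ t ∈ Set.Icc 0 T,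
        HasDerivWithinAt x ((-A).prodMap B (x t) + N (x t)) (Set.Icc 0 T) t) →
      (∀ t ∈ Set.Icc 0 T, ‖x t‖ ≤ M) → M ≤ K₀ →
      (∀ t ∈ Set.Icc 0 T,
        ‖x t‖ ≤ C * (Real.exp (-ε * t) + Real.exp (-ε * (T - t))) * M) ∧
      ∫ t in Set.Icc 0 T, ‖x t‖ ≤ C * M := by
  obtain ⟨c, hεc, hc⟩ := Order.exists_between_finsets {ε}
    ((A.charpoly.aroots ℂ + B.charpoly.aroots ℂ).toFinset.image Complex.re) (by
      simpa [-Polynomial.mem_roots', or_imp, forall_and] using And.intro hA hB)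
  simp only [Finset.mem_singleton, forall_eq, Finset.forall_mem_image, Multiset.mem_toFinset,
    Multiset.mem_add, or_imp, forall_and] at hεc hc
  obtain ⟨β, hβ⟩ := exists_isAccretiveForm hc.1
  obtain ⟨γ, hγ⟩ := exists_isAccretiveForm hc.2
  obtain ⟨D, hD, r, hr, hbound⟩ := exists_norm_le_of_isAccretiveForm hε.le hεc hβ hγ hN
  refine ⟨D * (1 + 2 / ε), by positivity, r, hr, fun T hT x M hx hM hMr => ?_⟩
  have hM0 : 0 ≤ M := (norm_nonneg _).trans (hM 0 (Set.left_mem_Icc.mpr hT))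
  have hpt := hbound T x M hx hM hMr
  refine ⟨fun t ht => (hpt t ht).trans ?_, ?_⟩
  · gcongr
    exact le_mul_of_one_le_right hD.le (le_add_of_nonneg_right (by positivity))
  · have hcont : ContinuousOn (fun t => ‖x t‖) (Set.Icc 0 T) :=
      (HasDerivWithinAt.continuousOn hx).norm
    calc ∫ t in Set.Icc 0 T, ‖x t‖
        ≤ D * M * (2 / ε) :=
          setIntegral_Icc_le_of_le_exp_add_exp hε (by positivity) hT hcont fun t ht => by
            rw [mul_right_comm]
            exact hpt t ht
      _ ≤ D * (1 + 2 / ε) * M := by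
          rw [mul_right_comm]
          gcongr
          exact le_add_of_nonneg_left zero_le_one

theorem charpoly_map_ofReal_roots {n : Type*} [Fintype n] [DecidableEq n] (A : Matrix n n ℝ) :
    (A.map Complex.ofReal).charpoly.roots = (Matrix.toLin' A).charpoly.aroots ℂ := by
  rw [Matrix.charpoly_toLin', Polynomial.aroots_def, ← Matrix.charpoly_map]
  rfl

theorem isLittleO_apply_self {Z E : Type*} [NormedAddCommGroup Z] [NormedSpace ℝ Z]
    [NormedAddCommGroup E] [NormedSpace ℝ E] {B : Z → Z →L[ℝ] E} (hB : ContinuousAt B 0)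
    (hB0 : B 0 = 0) : (fun z => B z z) =o[𝓝 0] id := by
  have hlim : Tendsto B (𝓝 0) (𝓝 0) := hB0 ▸ hB.tendsto
  have hbig : (fun z => B z z) =O[𝓝 0] fun z => ‖B z‖ * ‖z‖ :=
    .of_bound 1 (.of_forall fun z => by simpa using (B z).le_opNorm z)
  have hlittle : (fun z => ‖B z‖ * ‖z‖) =o[𝓝 0] fun z => (1 : ℝ) * ‖z‖ :=
    ((Asymptotics.isLittleO_one_iff ℝ).mpr hlim).norm_left.mul_isBigO (Asymptotics.isBigO_refl _ _)
  simp only [one_mul] at hlittle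
  exact (hbig.trans_isLittleO hlittle).of_norm_right

/-- Quantitative estimate near a hyperbolic fixed point: if all
complex eigenvalues of `Am` (the stable block) and `Ap` (the unstable block) have
real part `≥ δ > 0`, `Bm, Bp` are `C¹` near `0` with `Bm(0) = Bp(0) = 0`, and
`ε = δ/2`, then there are constants `C, K₀ > 0`, depending only on the data, such
that every solution `x = (xm, xp)` of `xm' = -Am·xm + Bm(x)x`, `xp' = Ap·xp + Bp(x)x`
on `[0,T]` with `sup_{[0,T]} ‖x‖ ≤ M ≤ K₀` satisfies
`‖x(t)‖ ≤ C(e^{-εt} + e^{-ε(T-t)})M` for all `t ∈ [0,T]` and `∫₀ᵀ ‖x(t)‖ dt ≤ CM`. -/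
theorem hyperbolic_block_estimate
    (km kp : ℕ) (hkm : 0 < km) (hkp : 0 < kp)
    (Am : Matrix (Fin km) (Fin km) ℝ) (Ap : Matrix (Fin kp) (Fin kp) ℝ)
    (δ : ℝ) (hδ : 0 < δ)
    (hAm : ∀ μ ∈ ((Am.map (Complex.ofReal : ℝ → ℂ)).charpoly).roots, δ ≤ μ.re)
    (hAp : ∀ μ ∈ ((Ap.map (Complex.ofReal : ℝ → ℂ)).charpoly).roots, δ ≤ μ.re)
    (U : Set ((Fin km → ℝ) × (Fin kp → ℝ)))
    (hU : U ∈ nhds (0 : (Fin km → ℝ) × (Fin kp → ℝ)))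
    (Bm : ((Fin km → ℝ) × (Fin kp → ℝ)) → ((Fin km → ℝ) × (Fin kp → ℝ)) →L[ℝ] (Fin km → ℝ))
    (Bp : ((Fin km → ℝ) × (Fin kp → ℝ)) → ((Fin km → ℝ) × (Fin kp → ℝ)) →L[ℝ] (Fin kp → ℝ))
    (hBm : ContDiffOn ℝ 1 Bm U) (hBp : ContDiffOn ℝ 1 Bp U)
    (hBm0 : Bm 0 = 0) (hBp0 : Bp 0 = 0)
    (ε : ℝ) (hε : ε = δ / 2) :
    ∃ C > (0 : ℝ), ∃ K₀ > (0 : ℝ),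
      ∀ T > (0 : ℝ), ∀ xm : ℝ → Fin km → ℝ, ∀ xp : ℝ → Fin kp → ℝ, ∀ M : ℝ,
        (∀ t ∈ Set.Icc (0 : ℝ) T, (xm t, xp t) ∈ U) →
        (∀ t ∈ Set.Icc (0 : ℝ) T,
          HasDerivAt xm (-(Am.mulVec (xm t)) + Bm (xm t, xp t) (xm t, xp t)) t) →
        (∀ t ∈ Set.Icc (0 : ℝ) T,
          HasDerivAt xp (Ap.mulVec (xp t) + Bp (xm t, xp t) (xm t, xp t)) t) →
        (∀ t ∈ Set.Icc (0 : ℝ) T, ‖(xm t, xp t)‖ ≤ M) →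
        M ≤ K₀ →
        (∀ t ∈ Set.Icc (0 : ℝ) T,
          ‖(xm t, xp t)‖ ≤ C * (Real.exp (-ε * t) + Real.exp (-ε * (T - t))) * M) ∧
        (∫ t in Set.Icc (0 : ℝ) T, ‖(xm t, xp t)‖) ≤ C * M := by
  have hεδ : ε < δ := by linarith
  have hN := (isLittleO_apply_self (hBm.continuousOn.continuousAt hU) hBm0).prod_left
    (isLittleO_apply_self (hBp.continuousOn.continuousAt hU) hBp0)
  obtain ⟨C, hC, K, hK, h⟩ := hyperbolic_block_estimate_general (Matrix.toLin' Am)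
    (Matrix.toLin' Ap) (by linarith : 0 < ε)
    (fun μ hμ => hεδ.trans_le (hAm μ (charpoly_map_ofReal_roots Am ▸ hμ)))
    (fun μ hμ => hεδ.trans_le (hAp μ (charpoly_map_ofReal_roots Ap ▸ hμ))) hN
  exact ⟨C, hC, K, hK, fun T hT xm xp M _ hm hp hM hMK => h T hT.le _ M
    (fun t ht => ((hm t ht).prodMk (hp t ht)).hasDerivWithinAt) hM hMK⟩
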